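/- For every x ∈ ℝ³ the function y ↦ I₀(x,y) is differentiable at every y ≠ x, and its partial derivatives with respect to y are given by the convergent integrals: for j = 1, 2, ∂I₀/∂y_j(x,y) = (b^{1/2}/(4π)^{3/2}) · (b(x_j−y_j)/2) ∫₁^∞ v^{1/2} e^{−b|x−y|²v/4} · coth(1/v) · exp(−(b|x_⊥−y_⊥|²/4)(coth(1/v) − v)) / (v² sinh(1/v)) dv, and ∂I₀/∂y₃(x,y) = (b^{1/2}/(4π)^{3/2}) · (b(x₃−y₃)/2) ∫₁^∞ v^{1/2} e^{−b|x−y|²v/4} · exp(−(b|x_⊥−y_⊥|²/4)(coth(1/v) − v)) / (v sinh(1/v)) dv. -/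

import Mathlib

/-!
Substituting `v = 1/u` turns the two right-hand integrals into
`∫₀¹ kerInt · coth u du` and `∫₀¹ kerInt / u du`, so the claim is differentiation of
`∫₀¹ kerInt du` under the integral sign.

Domination comes from `u ≤ sinh u ≤ u cosh u`: since `coth u ≥ 1/u`, the exponent of `kerInt` is at
most `-(b/4)|x-y|²/u`. If `|x-y| ≥ ρ > 0`, the bound `exp (-t) ≤ 6/t³` beats the singularity
`1/(u^{1/2} sinh u) ≤ 1/u²` with a factor `u` to spare (`kerInt_le`). That factor absorbs the
`1/u` and `coth u ≤ cosh 1 / u` produced by differentiation, so the gradient of `kerInt` is bounded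
by a constant, uniformly for `y` in a ball that stays away from `x` (`norm_kerGrad_le`).
-/

open MeasureTheory Set

/-- `|x_⊥ - y_⊥|²` for `x, y ∈ ℝ³`. -/
noncomputable def perpSq (x y : EuclideanSpace ℝ (Fin 3)) : ℝ :=
  (x 0 - y 0) ^ 2 + (x 1 - y 1) ^ 2

/-- The integrand `exp(-(b/4)[(x₃-y₃)²/u + coth(u)|x_⊥-y_⊥|²]) / (u^{1/2} sinh u)`. -/
noncomputable def kerInt (b : ℝ) (x y : EuclideanSpace ℝ (Fin 3)) (u : ℝ) : ℝ :=
  Real.exp (-(b / 4) * ((x 2 - y 2) ^ 2 / u + Real.cosh u / Real.sinh u * perpSq x y)) /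
    (Real.sqrt u * Real.sinh u)

/-- `I₀(x,y) = (b^{1/2}/(4π)^{3/2}) ∫₀¹ kerInt b x y u du`. -/
noncomputable def I0 (b : ℝ) (x y : EuclideanSpace ℝ (Fin 3)) : ℝ :=
  Real.sqrt b / (4 * Real.pi) ^ ((3 : ℝ) / 2) * ∫ u in Ioo (0 : ℝ) 1, kerInt b x y u

/-- `I_∞(x,y) = (b^{1/2}/(4π)^{3/2}) ∫₁^∞ kerInt b x y u du`. -/
noncomputable def IInf (b : ℝ) (x y : EuclideanSpace ℝ (Fin 3)) : ℝ :=
  Real.sqrt b / (4 * Real.pi) ^ ((3 : ℝ) / 2) * ∫ u in Ici (1 : ℝ), kerInt b x y u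

/-- Integrand of the formula for `∂I₀/∂y_j`, `j = 1, 2` (perpendicular directions):
`v^{1/2} e^{-b|x-y|²v/4} · coth(1/v) · exp(-(b|x_⊥-y_⊥|²/4)(coth(1/v) - v)) / (v² sinh(1/v))`. -/
noncomputable def Jperp (b : ℝ) (x y : EuclideanSpace ℝ (Fin 3)) (v : ℝ) : ℝ :=
  Real.sqrt v * Real.exp (-(b * dist x y ^ 2 * v / 4)) *
    (Real.cosh (1 / v) / Real.sinh (1 / v) *
        Real.exp (-(b * perpSq x y / 4) * (Real.cosh (1 / v) / Real.sinh (1 / v) - v)) /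
      (v ^ 2 * Real.sinh (1 / v)))

/-- Integrand of the formula for `∂I₀/∂y₃`:
`v^{1/2} e^{-b|x-y|²v/4} · exp(-(b|x_⊥-y_⊥|²/4)(coth(1/v) - v)) / (v sinh(1/v))`. -/
noncomputable def Jthird (b : ℝ) (x y : EuclideanSpace ℝ (Fin 3)) (v : ℝ) : ℝ :=
  Real.sqrt v * Real.exp (-(b * dist x y ^ 2 * v / 4)) *
    (Real.exp (-(b * perpSq x y / 4) * (Real.cosh (1 / v) / Real.sinh (1 / v) - v)) /
      (v * Real.sinh (1 / v)))

/-- Euclidean space `ℝ³`. -/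
abbrev E3 := EuclideanSpace ℝ (Fin 3)

lemma sinh_le_mul_cosh {u : ℝ} (hu : 0 ≤ u) : Real.sinh u ≤ u * Real.cosh u := by
  have hd : ∀ t : ℝ, HasDerivAt (fun t => t * Real.cosh t - Real.sinh t) (t * Real.sinh t) t := by
    intro t
    have h := ((hasDerivAt_id t).mul (Real.hasDerivAt_cosh t)).sub (Real.hasDerivAt_sinh t)
    refine h.congr_deriv ?_
    simp only [id]
    ring
  have hm : MonotoneOn (fun t => t * Real.cosh t - Real.sinh t) (Ici (0 : ℝ)) := by
    refine monotoneOn_of_deriv_nonneg (convex_Ici 0)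
      (fun t _ => (hd t).continuousAt.continuousWithinAt)
      (fun t _ => (hd t).differentiableAt.differentiableWithinAt) ?_
    intro t ht
    rw [interior_Ici] at ht
    rw [(hd t).deriv]
    exact mul_nonneg (le_of_lt ht) (Real.sinh_nonneg_iff.2 (le_of_lt ht))
  have h0 := hm (mem_Ici.2 le_rfl) (mem_Ici.2 hu) hu
  simp only [Real.sinh_zero, zero_mul, sub_zero] at h0
  linarith

lemma dist_sq_eq (x y : E3) : dist x y ^ 2 = perpSq x y + (x 2 - y 2) ^ 2 := by
  rw [EuclideanSpace.dist_eq, Real.sq_sqrt (Finset.sum_nonneg fun i _ => sq_nonneg _)]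
  simp [Fin.sum_univ_three, perpSq, Real.dist_eq, sq_abs]

lemma kerInt_nonneg (b : ℝ) (x y : E3) {u : ℝ} (hu : 0 < u) : 0 ≤ kerInt b x y u := by
  have := Real.sinh_pos_iff.2 hu
  unfold kerInt
  positivity

/-- The domination estimate, with the factor `u` that absorbs the `1/u` and `coth u` of the gradient. -/
lemma kerInt_le {b ρ : ℝ} (hb : 0 < b) (hρ : 0 < ρ) {x y : E3} (hxy : ρ ≤ dist x y)
    {u : ℝ} (hu : 0 < u) (hu1 : u ≤ 1) :
    kerInt b x y u ≤ 6 / (b / 4 * ρ ^ 2) ^ 3 * u := by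
  set c := b / 4 * ρ ^ 2 with hc
  have hc0 : 0 < c := by positivity
  have hs : 0 < Real.sinh u := Real.sinh_pos_iff.2 hu
  have hcoth : 1 / u ≤ Real.cosh u / Real.sinh u := by
    rw [div_le_div_iff₀ hu hs]
    linarith [sinh_le_mul_cosh hu.le]
  have hp : 0 ≤ perpSq x y := by unfold perpSq; positivity
  have hexp : Real.exp (-(b / 4) * ((x 2 - y 2) ^ 2 / u
      + Real.cosh u / Real.sinh u * perpSq x y)) ≤ Real.exp (-(c / u)) := by
    apply Real.exp_le_exp.2
    have h1 : ρ ^ 2 / u ≤ (x 2 - y 2) ^ 2 / u + Real.cosh u / Real.sinh u * perpSq x y := by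
      calc ρ ^ 2 / u ≤ dist x y ^ 2 / u := by gcongr
        _ = (x 2 - y 2) ^ 2 / u + 1 / u * perpSq x y := by rw [dist_sq_eq]; ring
        _ ≤ _ := by gcongr
    have h2 := mul_le_mul_of_nonneg_left h1 (by positivity : 0 ≤ b / 4)
    have h3 : c / u = b / 4 * (ρ ^ 2 / u) := by rw [hc]; ring
    linarith
  have hcube : Real.exp (-(c / u)) ≤ 6 * u ^ 3 / c ^ 3 := by
    have h := Real.pow_div_factorial_le_exp (c / u) (by positivity) 3
    rw [Real.exp_neg]
    have h6 : 6 * u ^ 3 / c ^ 3 = ((c / u) ^ 3 / (Nat.factorial 3 : ℕ))⁻¹ := by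
      simp only [Nat.factorial]
      push_cast
      field_simp
    rw [h6]
    exact inv_anti₀ (by positivity) h
  have hden : u ^ 2 ≤ Real.sqrt u * Real.sinh u := by
    have h1 : u ≤ Real.sqrt u := by
      apply Real.le_sqrt_of_sq_le
      nlinarith
    have h2 : u ≤ Real.sinh u := Real.self_le_sinh_iff.2 hu.le
    calc u ^ 2 = u * u := sq u
      _ ≤ _ := by gcongr
  calc kerInt b x y u ≤ (6 * u ^ 3 / c ^ 3) / u ^ 2 := by
        unfold kerInt
        exact div_le_div₀ (by positivity) (hexp.trans hcube) (by positivity) hden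
    _ = _ := by field_simp

lemma coth_le {u : ℝ} (hu : 0 < u) (hu1 : u ≤ 1) :
    Real.cosh u / Real.sinh u ≤ Real.cosh 1 / u := by
  have h2 : u ≤ Real.sinh u := Real.self_le_sinh_iff.2 hu.le
  have h3 : Real.cosh u ≤ Real.cosh 1 := by
    rw [Real.cosh_le_cosh, abs_of_pos hu, abs_one]; exact hu1
  exact div_le_div₀ (Real.cosh_pos 1).le h3 hu h2

/-- The weight `kerInt / u` that multiplies `(b/2)(x₃-y₃)` in `∂kerInt/∂y₃`. -/
noncomputable def wThird (b : ℝ) (x y : E3) (u : ℝ) : ℝ := kerInt b x y u / u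

/-- The weight `kerInt · coth u` that multiplies `(b/2)(x_j-y_j)` in `∂kerInt/∂y_j`, `j = 1, 2`. -/
noncomputable def wPerp (b : ℝ) (x y : E3) (u : ℝ) : ℝ :=
  kerInt b x y u * (Real.cosh u / Real.sinh u)

/-- The Fréchet derivative of `y ↦ kerInt b x y u`. -/
noncomputable def kerGrad (b : ℝ) (x y : E3) (u : ℝ) : E3 →L[ℝ] ℝ :=
  (wThird b x y u * (b / 2 * (x 2 - y 2))) • EuclideanSpace.proj (2 : Fin 3) +
    ((wPerp b x y u * (b / 2 * (x 0 - y 0))) • EuclideanSpace.proj (0 : Fin 3) +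
      (wPerp b x y u * (b / 2 * (x 1 - y 1))) • EuclideanSpace.proj (1 : Fin 3))

lemma wThird_bound {b ρ : ℝ} (hb : 0 < b) (hρ : 0 < ρ) {x y : E3} (hxy : ρ ≤ dist x y)
    {u : ℝ} (hu : 0 < u) (hu1 : u ≤ 1) :
    |wThird b x y u| ≤ 6 / (b / 4 * ρ ^ 2) ^ 3 * Real.cosh 1 := by
  have h0 := kerInt_nonneg b x y hu
  rw [wThird, abs_of_nonneg (by positivity), div_le_iff₀ hu]
  refine (kerInt_le hb hρ hxy hu hu1).trans ?_
  have h1 : 0 ≤ 6 / (b / 4 * ρ ^ 2) ^ 3 * u := by positivity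
  nlinarith [Real.one_le_cosh 1]

lemma wPerp_bound {b ρ : ℝ} (hb : 0 < b) (hρ : 0 < ρ) {x y : E3} (hxy : ρ ≤ dist x y)
    {u : ℝ} (hu : 0 < u) (hu1 : u ≤ 1) :
    |wPerp b x y u| ≤ 6 / (b / 4 * ρ ^ 2) ^ 3 * Real.cosh 1 := by
  have h0 := kerInt_nonneg b x y hu
  have hs := Real.sinh_pos_iff.2 hu
  have hc := Real.cosh_pos u
  rw [wPerp, abs_of_nonneg (by positivity)]
  calc _ ≤ (6 / (b / 4 * ρ ^ 2) ^ 3 * u) * (Real.cosh 1 / u) :=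
        mul_le_mul (kerInt_le hb hρ hxy hu hu1) (coth_le hu hu1) (by positivity) (by positivity)
    _ = _ := by field_simp

lemma norm_proj_le (i : Fin 3) : ‖(EuclideanSpace.proj i : E3 →L[ℝ] ℝ)‖ ≤ 1 :=
  ContinuousLinearMap.opNorm_le_bound _ zero_le_one fun v => by
    simpa using PiLp.norm_apply_le v i

lemma abs_sub_le_dist (x y : E3) (i : Fin 3) : |x i - y i| ≤ dist x y := by
  rw [dist_eq_norm]
  simpa using PiLp.norm_apply_le (x - y) i

lemma norm_kerGrad_le {b ρ R : ℝ} (hb : 0 < b) (hρ : 0 < ρ) {x y : E3} (hxy : ρ ≤ dist x y)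
    (hR : dist x y ≤ R) {u : ℝ} (hu : 0 < u) (hu1 : u ≤ 1) :
    ‖kerGrad b x y u‖ ≤ 3 * (6 / (b / 4 * ρ ^ 2) ^ 3 * Real.cosh 1 * (b / 2 * R)) := by
  have key : ∀ (w : ℝ) (i : Fin 3), |w| ≤ 6 / (b / 4 * ρ ^ 2) ^ 3 * Real.cosh 1 →
      ‖(w * (b / 2 * (x i - y i))) • (EuclideanSpace.proj i : E3 →L[ℝ] ℝ)‖ ≤
        6 / (b / 4 * ρ ^ 2) ^ 3 * Real.cosh 1 * (b / 2 * R) := by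
    intro w i hw
    have hM := (abs_nonneg w).trans hw
    have hR0 := dist_nonneg.trans hR
    have h1 : |b / 2 * (x i - y i)| ≤ b / 2 * R := by
      rw [abs_mul, abs_of_pos (by positivity : 0 < b / 2)]
      exact mul_le_mul_of_nonneg_left ((abs_sub_le_dist x y i).trans hR) (by positivity)
    rw [norm_smul, Real.norm_eq_abs, abs_mul]
    calc _ ≤ (6 / (b / 4 * ρ ^ 2) ^ 3 * Real.cosh 1 * (b / 2 * R)) * 1 :=
          mul_le_mul (mul_le_mul hw h1 (abs_nonneg _) hM) (norm_proj_le i) (norm_nonneg _)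
            (by positivity)
      _ = _ := mul_one _
  have h2 := key _ 2 (wThird_bound hb hρ hxy hu hu1)
  have h0 := key _ 0 (wPerp_bound hb hρ hxy hu hu1)
  have h1 := key _ 1 (wPerp_bound hb hρ hxy hu hu1)
  unfold kerGrad
  refine (norm_add_le _ _).trans ?_
  have := norm_add_le ((wPerp b x y u * (b / 2 * (x 0 - y 0))) •
      (EuclideanSpace.proj (0 : Fin 3) : E3 →L[ℝ] ℝ))
    ((wPerp b x y u * (b / 2 * (x 1 - y 1))) • EuclideanSpace.proj (1 : Fin 3))
  linarith

/-- No sign condition on `u` is needed: for fixed `u`, `kerInt` is a multiple of the exponential of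
a quadratic polynomial in `y`, with coefficients that may be junk values when `u ≤ 0`. -/
lemma hasFDerivAt_kerInt (b : ℝ) (x y : E3) (u : ℝ) :
    HasFDerivAt (fun y' => kerInt b x y' u) (kerGrad b x y u) y := by
  have hsq : ∀ i : Fin 3, HasFDerivAt (fun y' : E3 => (x i - y' i) ^ 2)
      ((-(2 * (x i - y i))) • (EuclideanSpace.proj i : E3 →L[ℝ] ℝ)) y := by
    intro i
    have h := (((EuclideanSpace.proj i : E3 →L[ℝ] ℝ).hasFDerivAt (x := y)).const_sub (x i)).pow 2
    refine h.congr_fderiv ?_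
    ext v
    simp
  have h := (((((hsq 2).mul_const u⁻¹).add
    (((hsq 0).add (hsq 1)).const_mul (Real.cosh u / Real.sinh u))).const_mul
      (-(b / 4))).exp).mul_const (Real.sqrt u * Real.sinh u)⁻¹
  refine HasFDerivAt.congr_fderiv (f' := _) h ?_
  ext v
  simp [kerGrad, wThird, wPerp, kerInt, perpSq, div_eq_mul_inv]
  ring

lemma measurable_kerInt (b : ℝ) (x y : E3) : Measurable (kerInt b x y) := by
  unfold kerInt
  fun_prop

lemma measurable_wThird (b : ℝ) (x y : E3) : Measurable (wThird b x y) :=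
  (measurable_kerInt b x y).div measurable_id

lemma measurable_wPerp (b : ℝ) (x y : E3) : Measurable (wPerp b x y) :=
  (measurable_kerInt b x y).mul (Real.measurable_cosh.div Real.measurable_sinh)

lemma stronglyMeasurable_kerGrad (b : ℝ) (x y : E3) : StronglyMeasurable (kerGrad b x y) := by
  have h3 := (measurable_wThird b x y).stronglyMeasurable
  have hp := (measurable_wPerp b x y).stronglyMeasurable
  exact ((h3.mul_const _).smul_const _).add
    (((hp.mul_const _).smul_const _).add ((hp.mul_const _).smul_const _))

lemma integrableOn_of_bound {f : ℝ → ℝ} (hf : Measurable f) {C : ℝ}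
    (h : ∀ u, 0 < u → u ≤ 1 → |f u| ≤ C) : IntegrableOn f (Ioo 0 1) :=
  IntegrableOn.of_bound measure_Ioo_lt_top hf.aestronglyMeasurable C
    ((ae_restrict_iff' measurableSet_Ioo).2 (ae_of_all _ fun u hu => h u hu.1 hu.2.le))

lemma image_inv_Ioi_one : (fun v : ℝ => v⁻¹) '' Ioi 1 = Ioo 0 1 := by
  have h := inv_Ioi₀ (zero_lt_one' ℝ)
  rw [inv_one] at h
  rw [← h]
  exact image_inv_eq_inv

/-- The substitution `u = 1/v`, for both integrability and the value of the integral. -/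
lemma subst_inv {f g : ℝ → ℝ} (hf : IntegrableOn f (Ioo 0 1))
    (hfg : ∀ v, 1 < v → g v = (v ^ 2)⁻¹ * f v⁻¹) :
    IntegrableOn g (Ici 1) ∧ ∫ v in Ici (1 : ℝ), g v = ∫ u in Ioo (0 : ℝ) 1, f u := by
  have hd : ∀ v ∈ Ioi (1 : ℝ), HasDerivWithinAt (fun v : ℝ => v⁻¹) (-(v ^ 2)⁻¹) (Ioi 1) v :=
    fun v hv => (hasDerivAt_inv (zero_lt_one.trans hv).ne').hasDerivWithinAt
  have hinj : InjOn (fun v : ℝ => v⁻¹) (Ioi 1) := inv_injective.injOn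
  have heq : EqOn (fun v : ℝ => |-(v ^ 2)⁻¹| • f v⁻¹) g (Ioi 1) := by
    intro v hv
    simp only [hfg v hv, abs_neg, smul_eq_mul]
    rw [abs_of_nonneg (by positivity)]
  constructor
  · rw [integrableOn_Ici_iff_integrableOn_Ioi]
    rw [← image_inv_Ioi_one,
      integrableOn_image_iff_integrableOn_abs_deriv_smul measurableSet_Ioi hd hinj] at hf
    exact hf.congr_fun heq measurableSet_Ioi
  · rw [integral_Ici_eq_integral_Ioi, ← image_inv_Ioi_one,
      integral_image_eq_integral_abs_deriv_smul measurableSet_Ioi hd hinj]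
    exact (setIntegral_congr_fun measurableSet_Ioi heq).symm

/-- The exponentials in `Jperp` and `Jthird` recombine into the one of `kerInt` at `u = 1/v`. -/
lemma kerInt_inv (b : ℝ) (x y : E3) {v : ℝ} (hv : 1 < v) :
    kerInt b x y v⁻¹ = Real.sqrt v * Real.exp (-(b * dist x y ^ 2 * v / 4)) *
      Real.exp (-(b * perpSq x y / 4) * (Real.cosh (1 / v) / Real.sinh (1 / v) - v)) /
        Real.sinh (1 / v) := by
  have hv0 : 0 < v := by linarith
  have hsv : 0 < Real.sqrt v := Real.sqrt_pos.2 hv0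
  rw [mul_assoc, ← Real.exp_add, kerInt, one_div, Real.sqrt_inv, dist_sq_eq]
  have : -(b / 4) * ((x 2 - y 2) ^ 2 / v⁻¹ + Real.cosh v⁻¹ / Real.sinh v⁻¹ * perpSq x y) =
      -(b * (perpSq x y + (x 2 - y 2) ^ 2) * v / 4) +
        -(b * perpSq x y / 4) * (Real.cosh v⁻¹ / Real.sinh v⁻¹ - v) := by
    rw [div_inv_eq_mul]; ring
  rw [this, div_mul_eq_div_div, div_inv_eq_mul, mul_comm (Real.exp _)]

/-- For every `x` the function `y ↦ I₀(x,y)` is differentiable at every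
`y ≠ x`, and its partial derivatives in `y` are given by the stated convergent integrals. -/
theorem stmt9 (b : ℝ) (hb : 0 < b) (x y : EuclideanSpace ℝ (Fin 3)) (hxy : y ≠ x) :
    DifferentiableAt ℝ (fun y' => I0 b x y') y ∧
    (∀ j : Fin 3, j ≠ 2 →
      IntegrableOn (Jperp b x y) (Ici 1) ∧
      fderiv ℝ (fun y' => I0 b x y') y (EuclideanSpace.single j 1) =
        Real.sqrt b / (4 * Real.pi) ^ ((3 : ℝ) / 2) * (b * (x j - y j) / 2) *
          ∫ v in Ici (1 : ℝ), Jperp b x y v) ∧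
    (IntegrableOn (Jthird b x y) (Ici 1) ∧
      fderiv ℝ (fun y' => I0 b x y') y (EuclideanSpace.single 2 1) =
        Real.sqrt b / (4 * Real.pi) ^ ((3 : ℝ) / 2) * (b * (x 2 - y 2) / 2) *
          ∫ v in Ici (1 : ℝ), Jthird b x y v) := by
  have hr : 0 < dist x y := dist_pos.2 hxy.symm
  have hρ : 0 < dist x y / 2 := by positivity
  have hhalf : dist x y / 2 ≤ dist x y := by linarith
  obtain ⟨hJ3, hJ3eq⟩ := subst_inv (g := Jthird b x y)
    (integrableOn_of_bound (measurable_wThird b x y)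
      fun u hu hu1 => wThird_bound hb hρ hhalf hu hu1)
    (fun v hv => by
      have hv0 : 0 < v := by linarith
      rw [wThird, kerInt_inv b x y hv, Jthird]
      field_simp)
  obtain ⟨hJp, hJpeq⟩ := subst_inv (g := Jperp b x y)
    (integrableOn_of_bound (measurable_wPerp b x y)
      fun u hu hu1 => wPerp_bound hb hρ hhalf hu hu1)
    (fun v hv => by
      have hv0 : 0 < v := by linarith
      have hs : 0 < Real.sinh (1 / v) := Real.sinh_pos_iff.2 (by positivity)
      rw [wPerp, kerInt_inv b x y hv, Jperp, ← one_div v]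
      field_simp)
  have hball : ∀ y' ∈ Metric.ball y (dist x y / 2),
      dist x y / 2 ≤ dist x y' ∧ dist x y' ≤ 2 * dist x y := by
    intro y' hy'
    rw [Metric.mem_ball] at hy'
    have h1 := dist_triangle x y' y
    have h2 := dist_triangle_right x y' y
    constructor <;> linarith
  have hbound : ∀ᵐ u ∂(volume.restrict (Ioo (0 : ℝ) 1)), ∀ y' ∈ Metric.ball y (dist x y / 2),
      ‖kerGrad b x y' u‖ ≤
        3 * (6 / (b / 4 * (dist x y / 2) ^ 2) ^ 3 * Real.cosh 1 * (b / 2 * (2 * dist x y))) :=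
    (ae_restrict_iff' measurableSet_Ioo).2 (ae_of_all _ fun u hu y' hy' =>
      norm_kerGrad_le hb hρ (hball y' hy').1 (hball y' hy').2 hu.1 hu.2.le)
  have hconst : ∀ C : ℝ, Integrable (fun _ : ℝ => C) (volume.restrict (Ioo (0 : ℝ) 1)) :=
    fun C => integrable_const C
  have hker : IntegrableOn (kerInt b x y) (Ioo 0 1) := by
    refine integrableOn_of_bound (C := 6 / (b / 4 * (dist x y / 2) ^ 2) ^ 3)
      (measurable_kerInt b x y) fun u hu hu1 => ?_
    rw [abs_of_nonneg (kerInt_nonneg b x y hu)]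
    exact (kerInt_le hb hρ hhalf hu hu1).trans (mul_le_of_le_one_right (by positivity) hu1)
  have hint : HasFDerivAt (fun y' => ∫ u in Ioo (0 : ℝ) 1, kerInt b x y' u)
      (∫ u in Ioo (0 : ℝ) 1, kerGrad b x y u) y :=
    hasFDerivAt_integral_of_dominated_of_fderiv_le (Metric.ball_mem_nhds y hρ)
      (Filter.Eventually.of_forall fun y' => (measurable_kerInt b x y').aestronglyMeasurable)
      hker (stronglyMeasurable_kerGrad b x y).aestronglyMeasurable hbound (hconst _)
      (ae_of_all _ fun u y' _ => hasFDerivAt_kerInt b x y' u)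
  have hgrad : Integrable (kerGrad b x y) (volume.restrict (Ioo (0 : ℝ) 1)) :=
    (hconst _).mono' (stronglyMeasurable_kerGrad b x y).aestronglyMeasurable
      (hbound.mono fun u hu => hu y (Metric.mem_ball_self hρ))
  have hI : HasFDerivAt (fun y' => I0 b x y') _ y :=
    hint.const_mul (Real.sqrt b / (4 * Real.pi) ^ ((3 : ℝ) / 2))
  refine ⟨hI.differentiableAt, fun j hj => ⟨hJp, ?_⟩, hJ3, ?_⟩
  · have hval : ∀ u, kerGrad b x y u (EuclideanSpace.single j 1) =
        wPerp b x y u * (b / 2 * (x j - y j)) := by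
      intro u
      fin_cases j
      · simp [kerGrad]
      · simp [kerGrad]
      · exact absurd rfl hj
    rw [hI.fderiv, smul_apply, ContinuousLinearMap.integral_apply hgrad, hJpeq]
    simp only [hval, integral_mul_const, smul_eq_mul]
    ring
  · have hval : ∀ u, kerGrad b x y u (EuclideanSpace.single 2 1) =
        wThird b x y u * (b / 2 * (x 2 - y 2)) := by
      intro u
      simp [kerGrad]
    rw [hI.fderiv, smul_apply, ContinuousLinearMap.integral_apply hgrad, hJ3eq]
    simp only [hval, integral_mul_const, smul_eq_mul]
    ring
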